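/- Assume F has characteristic 2 and let 0 ≤ s' ≤ k. Let u ∈ F^{2^k} be arbitrary (a GM-PC node: all positions outside the leftmost length-2^{s'} parity node are information positions), let c be the associated codeword, and let c' ∈ F^{2^{s'}} be the codeword of the first 2^{s'} entries of u under G2^{⊗s'}, i.e., c'(j) = ∑_{m<2^{s'}} u(m)·G2^{⊗s'}(m,j). Then for every 0 ≤ j < 2^{s'}: ∑_{a=0}^{2^{k−s'}−1} g0inv^{(k−s')}(a)·c(2^{s'}·a + j) = c'(j). (Paper's Theorem 8.) -/

import Mathlib

open Finset

variable {F : Type*}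

/-- Kronecker power of a 2×2 matrix, defined by the binary-digit product formula:
the `(i,j)` entry of `kron M k` is `∏ t < k, M i_t j_t` where `i_t, j_t` are the
`t`-th binary digits of `i` and `j`. -/
noncomputable def kron [Field F] (M : Matrix (Fin 2) (Fin 2) F) (k : ℕ) :
    Matrix (Fin (2 ^ k)) (Fin (2 ^ k)) F :=
  fun i j => ∏ t ∈ Finset.range k,
    M (if (i : ℕ).testBit t then 1 else 0) (if (j : ℕ).testBit t then 1 else 0)

/-- The 2×2 non-binary polar kernel with rows (μ, 0) and (γ, δ). -/
noncomputable def G2 [Field F] (μ γ δ : F) : Matrix (Fin 2) (Fin 2) F := !![μ, 0; γ, δ]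

/-- `Gk μ γ δ k = G2^{⊗k}`, the k-fold Kronecker power of the kernel. -/
noncomputable def Gk [Field F] (μ γ δ : F) (k : ℕ) : Matrix (Fin (2 ^ k)) (Fin (2 ^ k)) F :=
  kron (G2 μ γ δ) k

/-- `g0inv μ γ δ k` : first column of the inverse of `G2^{⊗k}`. -/
noncomputable def g0inv [Field F] (μ γ δ : F) (k : ℕ) (j : Fin (2 ^ k)) : F :=
  (Gk μ γ δ k)⁻¹ j ⟨0, Nat.two_pow_pos k⟩

/-- `rk μ γ δ k` : last row of `G2^{⊗k}`. -/
noncomputable def rk [Field F] (μ γ δ : F) (k : ℕ) (j : Fin (2 ^ k)) : F :=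
  Gk μ γ δ k ⟨2 ^ k - 1, by have := Nat.two_pow_pos k; omega⟩ j

/-- codeword associated to an input vector `u`: `cᵀ = uᵀ · G2^{⊗k}`. -/
noncomputable def codeword [Field F] (μ γ δ : F) (k : ℕ) (u : Fin (2 ^ k) → F)
    (j : Fin (2 ^ k)) : F :=
  ∑ i, u i * Gk μ γ δ k i j

theorem index_lt {p q n a b : ℕ} (ha : a < q) (hb : b < p) (h : p * q = n) :
    p * a + b < n := by
  subst h
  have h1 : p * a + b < p * (a + 1) := by
    have hm : p * (a + 1) = p * a + p := by ring
    omega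
  have h2 : p * (a + 1) ≤ p * q := Nat.mul_le_mul le_rfl ha
  omega

/-!
Cutting a vector of length `2 ^ (s + n)` into `2 ^ n` consecutive blocks of length `2 ^ s`, written
as the columns of a matrix `U`, turns encoding by `M^{⊗(s+n)} = M^{⊗n} ⊗ M^{⊗s}` into the two-sided
product `(M^{⊗s})ᵀ * U * M^{⊗n}`. Multiplying on the right by `(M^{⊗n})⁻¹` therefore decodes across
blocks and leaves each block encoded by `M^{⊗s}`; the theorem is the first column of this identity.
-/

open scoped Kronecker Matrix

section BlockDecomposition

variable {s n k : ℕ}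

/-- Splits an index below `2 ^ k` into its `n` high binary digits (the block number) and its `s` low
binary digits (the position inside the block). -/
def blockEquiv (hk : s + n = k) : Fin (2 ^ n) × Fin (2 ^ s) ≃ Fin (2 ^ k) :=
  finProdFinEquiv.trans (finCongr (by rw [← pow_add, add_comm, hk]))

theorem blockEquiv_apply (hk : s + n = k) (a : Fin (2 ^ n)) (j : Fin (2 ^ s)) :
    blockEquiv hk (a, j) = ⟨2 ^ s * a + j, index_lt a.isLt j.isLt (by rw [← pow_add, hk])⟩ :=
  Fin.ext (add_comm _ _)

/-- The vector `v` cut into consecutive blocks of length `2 ^ s`, which become the columns. -/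
def blockMatrix (hk : s + n = k) (v : Fin (2 ^ k) → F) : Matrix (Fin (2 ^ s)) (Fin (2 ^ n)) F :=
  Matrix.of fun j a => v (blockEquiv hk (a, j))

theorem vec_blockMatrix (hk : s + n = k) (v : Fin (2 ^ k) → F) :
    (blockMatrix hk v).vec = v ∘ blockEquiv hk :=
  rfl

end BlockDecomposition

section KroneckerPower

variable [Field F] (M : Matrix (Fin 2) (Fin 2) F) {s n k : ℕ}

theorem kron_submatrix_blockEquiv (hk : s + n = k) :
    (kron M k).submatrix (blockEquiv hk) (blockEquiv hk) = kron M n ⊗ₖ kron M s := by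
  subst hk
  ext ⟨b, m⟩ ⟨a, j⟩
  have low_digits : ∀ t ∈ range s, ∀ (c : ℕ) (i : Fin (2 ^ s)),
      (2 ^ s * c + i).testBit t = (i : ℕ).testBit t := fun t ht c i => by
    rw [Nat.testBit_two_pow_mul_add c i.isLt, if_pos (mem_range.1 ht)]
  have high_digits : ∀ (t c : ℕ) (i : Fin (2 ^ s)),
      (2 ^ s * c + i).testBit (s + t) = c.testBit t := fun t c i => by
    rw [Nat.testBit_two_pow_mul_add c i.isLt, if_neg (by omega), Nat.add_sub_cancel_left]
  simp only [Matrix.submatrix_apply, Matrix.kronecker_apply, kron, blockEquiv_apply,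
    prod_range_add, high_digits]
  rw [mul_comm]
  congr 1
  exact prod_congr rfl fun t ht => by rw [low_digits t ht, low_digits t ht]

theorem kron_zero : kron M 0 = 1 := by
  ext i j
  fin_cases i
  fin_cases j
  simp [kron]

theorem kron_one : kron M 1 = M := by
  ext i j
  fin_cases i <;> fin_cases j <;> simp [kron]

theorem blockMatrix_vecMul_kron (hk : s + n = k) (u : Fin (2 ^ k) → F) :
    blockMatrix hk (u ᵥ* kron M k) = (kron M s)ᵀ * blockMatrix hk u * kron M n := by
  rw [← Matrix.vec_inj, ← Matrix.vec_vecMul_kronecker, ← kron_submatrix_blockEquiv M hk,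
    Matrix.submatrix_vecMul_equiv, vec_blockMatrix, vec_blockMatrix, Function.comp_assoc,
    Equiv.self_comp_symm, Function.comp_id]

variable {M}

theorem isUnit_det_kron (hM : IsUnit M.det) (k : ℕ) : IsUnit (kron M k).det := by
  induction k with
  | zero => simp [kron_zero]
  | succ k ih =>
    rw [← Matrix.det_submatrix_equiv_self (blockEquiv (add_comm 1 k)), kron_submatrix_blockEquiv,
      Matrix.det_kronecker, kron_one]
    exact (ih.pow _).mul (hM.pow _)

theorem blockMatrix_vecMul_kron_mul_inv (hM : IsUnit M.det) (hk : s + n = k)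
    (u : Fin (2 ^ k) → F) :
    blockMatrix hk (u ᵥ* kron M k) * (kron M n)⁻¹ = (kron M s)ᵀ * blockMatrix hk u := by
  rw [blockMatrix_vecMul_kron, Matrix.mul_nonsing_inv_cancel_right _ _ (isUnit_det_kron hM n)]

theorem stmt12_general (hM : IsUnit M.det) (hk : s + n = k) (u : Fin (2 ^ k) → F)
    (b : Fin (2 ^ n)) (j : Fin (2 ^ s)) :
    ∑ a : Fin (2 ^ n), (kron M n)⁻¹ a b *
        (u ᵥ* kron M k) ⟨2 ^ s * a + j, index_lt a.isLt j.isLt (by rw [← pow_add, hk])⟩ =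
      ∑ m : Fin (2 ^ s),
        u ⟨2 ^ s * b + m, index_lt b.isLt m.isLt (by rw [← pow_add, hk])⟩ * kron M s m j := by
  have entry := congrFun₂ (blockMatrix_vecMul_kron_mul_inv hM hk u) j b
  simpa only [Matrix.mul_apply, Matrix.transpose_apply, blockMatrix, Matrix.of_apply,
    blockEquiv_apply, mul_comm] using entry

end KroneckerPower

theorem isUnit_det_G2 [Field F] {μ δ : F} (hμ : μ ≠ 0) (γ : F) (hδ : δ ≠ 0) :
    IsUnit (G2 μ γ δ).det := by
  simp [G2, hμ, hδ]

/-- Paper's Theorem 8 (GM-PC node): in characteristic 2, for arbitrary `u`,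
`∑_a g0inv^{(k−s')}(a)·c(2^{s'}·a + j) = c'(j)`, where `c'` is the codeword of the first
`2^{s'}` inputs under `G2^{⊗s'}` (the parity node). -/
theorem stmt12 [Field F] [CharP F 2] (μ γ δ : F) (hμ : μ ≠ 0) (hγ : γ ≠ 0) (hδ : δ ≠ 0)
    (k s' : ℕ) (hs : s' ≤ k)
    (u : Fin (2 ^ k) → F)
    (c' : Fin (2 ^ s') → F)
    (hc' : ∀ j : Fin (2 ^ s'), c' j = ∑ mm : Fin (2 ^ s'),
      u ⟨(mm : ℕ), by
          have h1 : (2 : ℕ) ^ s' ≤ 2 ^ k := Nat.pow_le_pow_right (by norm_num) hs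
          have := mm.isLt; omega⟩ * Gk μ γ δ s' mm j)
    (j : Fin (2 ^ s')) :
    (∑ a : Fin (2 ^ (k - s')), g0inv μ γ δ (k - s') a *
        codeword μ γ δ k u
          ⟨2 ^ s' * (a : ℕ) + (j : ℕ),
            index_lt a.isLt j.isLt (by rw [← pow_add]; congr 1; omega)⟩) = c' j := by
  simpa only [hc', mul_zero, zero_add] using!
    stmt12_general (isUnit_det_G2 hμ γ hδ) (Nat.add_sub_of_le hs) u ⟨0, Nat.two_pow_pos _⟩ j
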